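/- Let 1 ∈ A ⊆ B be an inclusion of unital C*-algebras, let E : B → A be a conditional expectation admitting a quasi-basis ((v_1, v_1*), ..., (v_n, v_n*)) (so E is of index-finite type). Then tsr(B) ≤ tsr(A) + n − 1. -/

import Mathlib

/-- The set `Lg_n(A)` of left-generating `n`-tuples: tuples `(b 0, …, b (n-1))` such that
`∑ᵢ bᵢ* bᵢ` is invertible. -/
def Lg (A : Type*) [NormedRing A] [StarRing A] (n : ℕ) : Set (Fin n → A) :=
  {b | IsUnit (∑ i, star (b i) * b i)}

/-- The topological stable rank of a unital (C*-)algebra: the least `n ≥ 1` such that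
`Lg_n(A)` is dense in `Aⁿ`, or `∞` if there is no such `n`. -/
noncomputable def tsr (A : Type*) [NormedRing A] [StarRing A] : ℕ∞ :=
  sInf {N : ℕ∞ | ∃ n : ℕ, 1 ≤ n ∧ N = n ∧ Dense (Lg A n)}

/-- A C*-algebra is simple if it is nonzero and has no nontrivial closed two-sided ideals. -/
def CStarSimple (A : Type*) [CStarAlgebra A] : Prop :=
  (0 : A) ≠ 1 ∧ ∀ I : TwoSidedIdeal A, IsClosed (I : Set A) → I = ⊥ ∨ I = ⊤

/-- A unital C*-algebra is finite if every isometry is a unitary (equivalently, `1` is not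
Murray–von Neumann equivalent to a proper subprojection). -/
def CStarFinite (A : Type*) [CStarAlgebra A] : Prop :=
  ∀ v : A, star v * v = 1 → v * star v = 1

/-- A tracial state on a unital C*-algebra: a unital positive linear functional `τ`
with `τ(ab) = τ(ba)`. -/
def IsTracialState (A : Type*) [CStarAlgebra A] (τ : WeakDual ℂ A) : Prop :=
  τ 1 = 1 ∧ (∀ a : A, ∃ r : ℝ, 0 ≤ r ∧ τ (star a * a) = (r : ℂ)) ∧
    ∀ a b : A, τ (a * b) = τ (b * a)

/-- The trace space `T(A)`, as a subset of the weak-* dual. -/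
def TraceSpace (A : Type*) [CStarAlgebra A] : Set (WeakDual ℂ A) :=
  {τ | IsTracialState A τ}

/-- A conditional expectation from `B` onto `A`, relative to a unital embedding
`ι : A → B`: a unital positive `A`-bimodule projection of `B` onto `A`. -/
structure CondExpectation {A B : Type*} [CStarAlgebra A] [CStarAlgebra B]
    (ι : A →⋆ₐ[ℂ] B) where
  toFun : B →L[ℂ] A
  fix : ∀ a : A, toFun (ι a) = a
  left_mod : ∀ (a : A) (b : B), toFun (ι a * b) = a * toFun b
  right_mod : ∀ (a : A) (b : B), toFun (b * ι a) = toFun b * a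
  star_map : ∀ b : B, toFun (star b) = star (toFun b)
  pos : ∀ b : B, ∃ c : A, toFun (star b * b) = star c * c

/-- A quasi-basis for a conditional expectation `E`: a finite family `(v k)` in `B` with
`b = ∑ₖ vₖ E(vₖ* b) = ∑ₖ E(b vₖ) vₖ*` for all `b`. -/
def IsQuasiBasis {A B : Type*} [CStarAlgebra A] [CStarAlgebra B] {ι : A →⋆ₐ[ℂ] B}
    (E : CondExpectation ι) {n : ℕ} (v : Fin n → B) : Prop :=
  ∀ b : B, (b = ∑ k, v k * ι (E.toFun (star (v k) * b))) ∧
    (b = ∑ k, ι (E.toFun (b * v k)) * star (v k))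

/-- An inclusion `A ⊆ B` (given by the unital embedding `ι`) is of index-finite type if
there is a conditional expectation `E : B → A` admitting a finite quasi-basis. -/
def IndexFiniteType {A B : Type*} [CStarAlgebra A] [CStarAlgebra B]
    (ι : A →⋆ₐ[ℂ] B) : Prop :=
  ∃ (E : CondExpectation ι) (n : ℕ) (v : Fin n → B), IsQuasiBasis E v

/-- A realization of the (spatial/maximal, these agree in the nuclear case) C*-tensor
product of `B` and `Z`: a C*-algebra `T` together with commuting unital embeddings of `B`
and `Z` whose images generate `T` as a C*-algebra. -/
structure CStarTensor (B Z T : Type*) [CStarAlgebra B] [CStarAlgebra Z]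
    [CStarAlgebra T] where
  ι₁ : B →⋆ₐ[ℂ] T
  ι₂ : Z →⋆ₐ[ℂ] T
  inj₁ : Function.Injective ι₁
  inj₂ : Function.Injective ι₂
  comm : ∀ (b : B) (z : Z), ι₁ b * ι₂ z = ι₂ z * ι₁ b
  generates :
    (StarAlgebra.adjoin ℂ (Set.range (⇑ι₁) ∪ Set.range (⇑ι₂))).topologicalClosure = ⊤

/-- `B` absorbs `Z` tensorially: `B ⊗ Z ≅ B`. -/
def AbsorbsTensor (B Z : Type*) [CStarAlgebra B] [CStarAlgebra Z] : Prop :=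
  ∃ (T : Type) (_ : CStarAlgebra T) (_ : CStarTensor B Z T), Nonempty (T ≃⋆ₐ[ℂ] B)

/-- The n×n matrix algebra `Mₙ(ℂ)`, realized as operators on `ℂⁿ`. -/
abbrev MatrixAlg (n : ℕ) : Type :=
  EuclideanSpace ℂ (Fin n) →L[ℂ] EuclideanSpace ℂ (Fin n)

/-- A linear map between C*-algebras is completely positive if all of its matrix
amplifications preserve positivity. -/
def IsCompletelyPositive {A B : Type*} [CStarAlgebra A] [CStarAlgebra B]
    (φ : A →L[ℂ] B) : Prop :=
  ∀ (n : ℕ) (x : Matrix (Fin n) (Fin n) A), (∃ y : Matrix (Fin n) (Fin n) A, x = star y * y) →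
    ∃ z : Matrix (Fin n) (Fin n) B, x.map (⇑φ) = star z * z

/-- A C*-algebra is nuclear if the identity map can be approximated pointwise in norm by
unital completely positive maps factoring through matrix algebras. -/
def IsNuclear (A : Type*) [CStarAlgebra A] : Prop :=
  ∀ (s : Finset A) (ε : ℝ), 0 < ε →
    ∃ (n : ℕ) (φ : A →L[ℂ] MatrixAlg n) (ψ : MatrixAlg n →L[ℂ] A),
      IsCompletelyPositive φ ∧ IsCompletelyPositive ψ ∧ φ 1 = 1 ∧ ‖ψ‖ ≤ 1 ∧
      ∀ a ∈ s, ‖ψ (φ a) - a‖ < ε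

/-- The Jiang–Su algebra: the (unique) unital separable simple infinite-dimensional
nuclear C*-algebra with a unique tracial state whose K-theory agrees with that of `ℂ`;
here characterized by the listed properties together with being strongly self-absorbing. -/
structure IsJiangSuAlgebra (Z : Type*) [CStarAlgebra Z] : Prop where
  separable : TopologicalSpace.SeparableSpace Z
  simple : CStarSimple Z
  nuclear : IsNuclear Z
  infiniteDimensional : ¬ FiniteDimensional ℂ Z
  uniqueTracialState : ∃! τ : WeakDual ℂ Z, IsTracialState Z τ
  selfAbsorbing : AbsorbsTensor Z Z

/-- An action of a group `G` on a C*-algebra `A` by *-automorphisms. -/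
structure CStarAction (G : Type*) [Group G] (A : Type*) [CStarAlgebra A] where
  hom : G → (A ≃⋆ₐ[ℂ] A)
  hom_one : ∀ a : A, hom 1 a = a
  hom_mul : ∀ (g h : G) (a : A), hom (g * h) a = hom g (hom h a)

/-- A realization of the C*-crossed product `A ⋊_α G` (for `G` finite, the universal and
reduced crossed products agree): a C*-algebra `B` generated by a copy of `A` and unitaries
`u g` implementing `α`, together with the canonical faithful conditional expectation onto
`A` determined by `E(a u_g) = δ_{g,e} a`. -/
structure CrossedProduct (G : Type*) [Group G] (A : Type*) [CStarAlgebra A]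
    (α : CStarAction G A) (B : Type*) [CStarAlgebra B] where
  ι : A →⋆ₐ[ℂ] B
  inj : Function.Injective ι
  u : G → B
  u_unitary : ∀ g, star (u g) * u g = 1 ∧ u g * star (u g) = 1
  u_mul : ∀ g h, u g * u h = u (g * h)
  u_one : u 1 = 1
  covariant : ∀ (g : G) (a : A), u g * ι a * star (u g) = ι (α.hom g a)
  generates :
    (StarAlgebra.adjoin ℂ (Set.range (⇑ι) ∪ Set.range u)).topologicalClosure = ⊤
  E : B →L[ℂ] B
  E_apply_one : ∀ a : A, E (ι a * u 1) = ι a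
  E_apply_ne : ∀ (a : A) (g : G), g ≠ 1 → E (ι a * u g) = 0
  E_mem : ∀ b, E b ∈ Set.range (⇑ι)
  E_pos : ∀ b : B, ∃ a : A, E (star b * b) = ι (star a * a)
  E_faithful : ∀ b : B, E (star b * b) = 0 → b = 0

/-- Covering dimension at most `n`: every open cover has an open refinement in which each
point lies in at most `n + 1` sets. -/
def CoveringDimLe (X : Type*) [TopologicalSpace X] (n : ℕ) : Prop :=
  ∀ (I : Type) (U : I → Set X), (∀ i, IsOpen (U i)) → (⋃ i, U i) = Set.univ →
    ∃ (J : Type) (V : J → Set X), (∀ j, IsOpen (V j)) ∧ (⋃ j, V j) = Set.univ ∧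
      (∀ j, ∃ i, V j ⊆ U i) ∧
      ∀ x : X, {j | x ∈ V j}.Finite ∧ {j | x ∈ V j}.ncard ≤ n + 1

/-! A left `A`-module generated by `n` elements is a continuous quotient of `Aⁿ`, so it suffices
to know that the generating families of `m + n - 1` vectors are dense in `Aⁿ` as soon as the left
generating `m`-tuples are dense in `A`. This follows by row reduction, one coordinate at a time:
after perturbing the first coordinates of all rows but one, some combination of the rows is a
pivot with first coordinate `1`; clearing the first column with it leaves rows in `Aⁿ⁻¹`.
A conditional expectation with a quasi-basis of length `n` exhibits `B` as a left `A`-module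
generated by the `n` elements `vₖ*`. -/

open scoped CStarAlgebra

/-- The `N`-tuples that generate the left `R`-module `M`. For `M = R` these are the tuples
generating `R` as a left ideal; over a C⋆-algebra they form the set `Lg`. -/
def generatingTuples (R M : Type*) [Semiring R] [AddCommMonoid M] [Module R M] (N : ℕ) :
    Set (Fin N → M) :=
  {x | Submodule.span R (Set.range x) = ⊤}

section Algebraic

open Matrix

variable {R M : Type*}

lemma exists_sum_mul_eq_one [Semiring R] {N : ℕ} {c : Fin N → R}
    (hc : c ∈ generatingTuples R R N) : ∃ d : Fin N → R, ∑ i, d i * c i = 1 :=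
  (Submodule.mem_span_range_iff_exists_fun R).1 <| hc.ge Submodule.mem_top

lemma vecCons_mem_generatingTuples [Semiring R] [AddCommMonoid M] [Module R M] {N : ℕ}
    {x : Fin N → M} (hx : x ∈ generatingTuples R M N) (x₀ : M) :
    vecCons x₀ x ∈ generatingTuples R M (N + 1) := by
  refine top_le_iff.1 <| hx.ge.trans <| Submodule.span_mono ?_
  exact range_cons x₀ x ▸ Set.subset_union_right

lemma comp_mem_generatingTuples {R' M' : Type*} [Semiring R] [AddCommMonoid M] [Module R M]
    [Semiring R'] [AddCommMonoid M'] [Module R' M'] {σ : R →+* R'} (f : M →ₛₗ[σ] M')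
    (hf : Function.Surjective f) {N : ℕ} {x : Fin N → M} (hx : x ∈ generatingTuples R M N) :
    f ∘ x ∈ generatingTuples R' M' N := by
  have hle : Submodule.span R (Set.range x) ≤
      (Submodule.span R' (Set.range (f ∘ x))).comap f :=
    Submodule.span_le.2 <| Set.range_subset_iff.2 fun i => Submodule.subset_span ⟨i, rfl⟩
  refine Submodule.eq_top_iff'.2 <| hf.forall.2 fun y => ?_
  exact hle <| hx.ge Submodule.mem_top

variable [Ring R] [AddCommGroup M] [Module R M]

lemma vecCons_sub_sum_mem_generatingTuples {N : ℕ} {x₀ : M} {x : Fin N → M}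
    (hx : vecCons x₀ x ∈ generatingTuples R M (N + 1)) (e : Fin N → R) :
    vecCons (x₀ - ∑ i, e i • x i) x ∈ generatingTuples R M (N + 1) := by
  set S := Submodule.span R (Set.range (vecCons (x₀ - ∑ i, e i • x i) x))
  have mem_tail (i : Fin N) : x i ∈ S := Submodule.subset_span ⟨i.succ, rfl⟩
  have mem_head : x₀ ∈ S :=
    (S.sub_mem_iff_left (S.sum_mem fun i _ => S.smul_mem (e i) (mem_tail i))).1 <|
      Submodule.subset_span ⟨0, rfl⟩
  refine top_le_iff.1 <| hx.ge.trans <| Submodule.span_le.2 <| Set.range_subset_iff.2 ?_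
  exact Fin.cases mem_head mem_tail

lemma vecCons_add_smul_mem_generatingTuples {N : ℕ} {r : R × M} (hr : r.1 = 1) (c : Fin N → R)
    {z : Fin N → M} (hz : z ∈ generatingTuples R M N) :
    vecCons r (fun i => (0, z i) + c i • r) ∈ generatingTuples R (R × M) (N + 1) := by
  set S := Submodule.span R (Set.range (vecCons r (fun i => (0, z i) + c i • r)))
  have mem_head : r ∈ S := Submodule.subset_span ⟨0, rfl⟩
  have mem_tail (i : Fin N) : ((0, z i) : R × M) ∈ S :=
    (S.add_mem_iff_left (S.smul_mem (c i) mem_head)).1 <| Submodule.subset_span ⟨i.succ, rfl⟩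
  have hle : Submodule.span R (Set.range z) ≤ S.comap (LinearMap.inr R R M) :=
    Submodule.span_le.2 <| Set.range_subset_iff.2 mem_tail
  have mem_inr (y : M) : ((0, y) : R × M) ∈ S := hle <| hz.ge Submodule.mem_top
  refine Submodule.eq_top_iff'.2 fun x => ?_
  have hx : x = x.1 • r + (0, x.2 - x.1 • r.2) := by
    ext <;> simp [hr]
  exact hx ▸ S.add_mem (S.smul_mem _ mem_head) (mem_inr _)

end Algebraic

section Density

open Matrix

variable {R M : Type*} [TopologicalSpace M]

lemma dense_generatingTuples_succ [Semiring R] [AddCommMonoid M] [Module R M] {N : ℕ}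
    (h : Dense (generatingTuples R M N)) : Dense (generatingTuples R M (N + 1)) := by
  intro x
  rw [← cons_head_tail x]
  exact map_mem_closure (by fun_prop) (h (vecTail x)) fun _ hy =>
    vecCons_mem_generatingTuples hy (vecHead x)

lemma dense_generatingTuples_add [Semiring R] [AddCommMonoid M] [Module R M] {N : ℕ}
    (h : Dense (generatingTuples R M N)) (k : ℕ) : Dense (generatingTuples R M (N + k)) := by
  induction k with
  | zero => exact h
  | succ k ih => exact dense_generatingTuples_succ ih

lemma dense_generatingTuples_map {R' M' : Type*} [TopologicalSpace M']
    [Semiring R] [AddCommMonoid M] [Module R M] [Semiring R'] [AddCommMonoid M'] [Module R' M']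
    {σ : R →+* R'} (f : M →ₛₗ[σ] M') (hf : Continuous f) (hsurj : Function.Surjective f) {N : ℕ}
    (h : Dense (generatingTuples R M N)) : Dense (generatingTuples R' M' N) :=
  hsurj.comp_left.denseRange.dense_of_mapsTo (by fun_prop) h fun _ hx =>
    comp_mem_generatingTuples f hsurj hx

variable [Ring R] [TopologicalSpace R] [IsTopologicalRing R]
  [AddCommGroup M] [IsTopologicalAddGroup M] [Module R M]

lemma vecCons_mem_closure_generatingTuples_of_fst_eq_one {N : ℕ}
    (h : Dense (generatingTuples R M N)) {r : R × M} (hr : r.1 = 1) (x : Fin N → R × M) :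
    vecCons r x ∈ closure (generatingTuples R (R × M) (N + 1)) := by
  set z : Fin N → M := fun i => (x i).2 - (x i).1 • r.2
  have hx : x = fun i => (0, z i) + (x i).1 • r := by
    ext i <;> simp [z, hr]
  rw [hx]
  exact map_mem_closure (f := fun z : Fin N → M => vecCons r fun i => (0, z i) + (x i).1 • r)
    (by fun_prop) (h z) fun _ hy => vecCons_add_smul_mem_generatingTuples hr _ hy

variable [ContinuousConstSMul R M]

lemma vecCons_mem_closure_generatingTuples {N : ℕ} (h : Dense (generatingTuples R M N))
    (x₀ : R × M) {x : Fin N → R × M} (hx : (fun i => (x i).1) ∈ generatingTuples R R N) :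
    vecCons x₀ x ∈ closure (generatingTuples R (R × M) (N + 1)) := by
  obtain ⟨d, hd⟩ := exists_sum_mul_eq_one hx
  set e : Fin N → R := fun i => (1 - x₀.1) * d i
  set r : R × M := x₀ + ∑ i, e i • x i with hr
  have hr₁ : r.1 = 1 := by
    simp [hr, e, Prod.fst_sum, mul_assoc, ← Finset.mul_sum, hd]
  have hx₀ : x₀ = r - ∑ i, e i • x i := by simp [hr]
  rw [hx₀]
  exact map_mem_closure (f := fun w : Fin (N + 1) → R × M =>
      vecCons (w 0 - ∑ i, e i • w i.succ) fun i => w i.succ) (by fun_prop)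
    (vecCons_mem_closure_generatingTuples_of_fst_eq_one h hr₁ x) fun w hw =>
    vecCons_sub_sum_mem_generatingTuples ((cons_head_tail w).symm ▸ hw) e

lemma dense_generatingTuples_prod {N : ℕ} (hR : Dense (generatingTuples R R N))
    (hM : Dense (generatingTuples R M N)) : Dense (generatingTuples R (R × M) (N + 1)) := by
  intro x
  rw [← cons_head_tail x, ← closure_closure]
  exact map_mem_closure
    (f := fun c : Fin N → R => vecCons (vecHead x) fun i => (c i, (vecTail x i).2))
    (by fun_prop) (hR fun i => (vecTail x i).1) fun c hc =>
    vecCons_mem_closure_generatingTuples hM (vecHead x) hc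

lemma dense_generatingTuples_pi {m : ℕ} (h : Dense (generatingTuples R R m)) (n : ℕ) :
    Dense (generatingTuples R (Fin n → R) (m + (n - 1))) := by
  match n with
  | 0 => exact dense_univ.mono fun x _ => Subsingleton.elim _ _
  | n + 1 =>
    induction n with
    | zero =>
      exact dense_generatingTuples_map
        (ContinuousLinearEquiv.funUnique (Fin 1) R R).symm.toLinearMap
        (ContinuousLinearEquiv.continuous _) (ContinuousLinearEquiv.surjective _) h
    | succ n ih =>
      exact dense_generatingTuples_map (Fin.consEquivL R fun _ : Fin (n + 2) => R).toLinearMap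
        (ContinuousLinearEquiv.continuous _) (ContinuousLinearEquiv.surjective _)
        (dense_generatingTuples_prod (dense_generatingTuples_add h n) ih)

end Density

lemma Lg_subset_generatingTuples (A : Type*) [NormedRing A] [StarRing A] (N : ℕ) :
    Lg A N ⊆ generatingTuples A A N := fun _ hb =>
  Ideal.eq_top_of_isUnit_mem _
    (Ideal.sum_mem _ fun i _ => Ideal.mul_mem_left _ _ <| Ideal.subset_span ⟨i, rfl⟩) hb

lemma isUnit_sum_star_mul_self {B κ : Type*} [CStarAlgebra B] [Fintype κ] {b d : κ → B}
    (hdb : ∑ i, d i * b i = 1) : IsUnit (∑ i, star (b i) * b i) := by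
  let _ := CStarAlgebra.spectralOrder B
  have := CStarAlgebra.spectralOrderedRing B
  let x : WithCStarModule B (κ → B) := (WithCStarModule.equiv B (κ → B)).symm d
  let y : WithCStarModule B (κ → B) := (WithCStarModule.equiv B (κ → B)).symm (star b)
  have hxy : inner B x y = 1 := by
    rw [WithCStarModule.pi_inner, ← star_one B, ← hdb, star_sum]
    simp [x, y, WithCStarModule.inner_def]
  have hyy : inner B y y = ∑ i, star (b i) * b i := by
    simp [y, WithCStarModule.pi_inner, WithCStarModule.inner_def]
  -- Cauchy–Schwarz in the Hilbert module `B^κ`, applied to `d` and `b*`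
  have hle : 1 ≤ ‖x‖ ^ 2 • ∑ i, star (b i) * b i := by
    have hyx : inner B y x = 1 := by rw [← CStarModule.star_inner, hxy, star_one]
    simpa only [hxy, hyx, hyy, one_mul] using
      CStarModule.inner_mul_inner_swap_le (A := B) (x := x) (y := y)
  have hunit : IsUnit (‖x‖ ^ 2 • ∑ i, star (b i) * b i) := CStarAlgebra.isUnit_of_le 1 hle
  rw [Algebra.smul_def, (Algebra.commute_algebraMap_left _ _).isUnit_mul_iff] at hunit
  exact hunit.2

lemma Lg_eq_generatingTuples (B : Type*) [CStarAlgebra B] (N : ℕ) :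
    Lg B N = generatingTuples B B N := by
  refine (Lg_subset_generatingTuples B N).antisymm fun b hb => ?_
  obtain ⟨d, hd⟩ := exists_sum_mul_eq_one hb
  exact isUnit_sum_star_mul_self hd

lemma tsr_le_of_dense_Lg {A : Type*} [NormedRing A] [StarRing A] {m : ℕ} (hm : 1 ≤ m)
    (h : Dense (Lg A m)) : tsr A ≤ m :=
  sInf_le ⟨m, hm, rfl, h⟩

lemma exists_dense_Lg_of_tsr_ne_top {A : Type*} [NormedRing A] [StarRing A] (h : tsr A ≠ ⊤) :
    ∃ m : ℕ, 1 ≤ m ∧ tsr A = m ∧ Dense (Lg A m) :=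
  csInf_mem <| Set.nonempty_iff_ne_empty.2 fun hempty => h <|
    (congrArg sInf hempty).trans sInf_empty

theorem tsr_le_of_quasiBasis_general (A B : Type*) [NormedRing A] [StarRing A] [CStarAlgebra B]
    (φ : A →+* B) (hφ : Continuous φ) (n : ℕ) (v : Fin n → B)
    (hv : ∀ b, ∃ a : Fin n → A, ∑ k, φ (a k) * v k = b) :
    tsr B ≤ tsr A + (n - 1 : ℕ) := by
  rcases eq_or_ne (tsr A) ⊤ with htop | htop
  · simp [htop]
  obtain ⟨m, hm, htsr, hdense⟩ := exists_dense_Lg_of_tsr_ne_top htop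
  let f : (Fin n → A) →ₛₗ[φ] B :=
    { toFun a := ∑ k, φ (a k) * v k
      map_add' a a' := by simp [add_mul, Finset.sum_add_distrib]
      map_smul' c a := by simp [mul_assoc, Finset.mul_sum] }
  have hf : Continuous f :=
    show Continuous fun a : Fin n → A => ∑ k, φ (a k) * v k by fun_prop
  have hB : Dense (Lg B (m + (n - 1))) := by
    rw [Lg_eq_generatingTuples]
    exact dense_generatingTuples_map f hf hv <|
      dense_generatingTuples_pi (hdense.mono <| Lg_subset_generatingTuples A m) n
  rw [htsr]
  exact_mod_cast tsr_le_of_dense_Lg (hm.trans <| Nat.le_add_right _ _) hB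

/-- if `E : B → A` is a conditional expectation with a quasi-basis of length
`n`, then `tsr B ≤ tsr A + n - 1`. -/
theorem tsr_le_of_quasiBasis (A B : Type*) [CStarAlgebra A] [CStarAlgebra B]
    (ι : A →⋆ₐ[ℂ] B) (hι : Function.Injective ι) (E : CondExpectation ι)
    (n : ℕ) (v : Fin n → B) (hv : IsQuasiBasis E v) :
    tsr B ≤ tsr A + (n - 1 : ℕ) :=
  tsr_le_of_quasiBasis_general A B ι (map_continuous ι) n (fun k => star (v k))
    fun b => ⟨fun k => E.toFun (b * v k), (hv b).2.symm⟩
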